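/- The assignment of Proposition 3.3 defines an irreducible representation of the type-A generalized quantum group: for any (ε₁,…,ε_n) ∈ {0,1}^n and nonzero parameter x (an indeterminate over ℂ(q)), the operators e_i, f_i, k_i^{±1} (i ∈ ℤ/nℤ) of the type-A action π_x on 𝒲_l satisfy k_i k_i^{−1} = k_i^{−1} k_i = 1, k_i k_j = k_j k_i, k_i e_j = D_{i,j} e_j k_i, k_i f_j = D_{i,j}^{−1} f_j k_i and e_i f_j − f_j e_i = δ_{i,j}(k_i − k_i^{−1})/(q − q^{−1}) for all i,j ∈ ℤ/nℤ; moreover, for l with 0 ≤ l ≤ n if ε₁⋯ε_n = 1 and l ∈ ℕ otherwise, the only subspaces of 𝒲_l invariant under all of these operators are {0} and 𝒲_l. -/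

import Mathlib

/-!
Up to powers of `x`, the generators `e_r` and `f_r` are the operators
`|m⟩ ↦ [m_a] |m - e_a + e_b⟩` moving a particle between the neighbouring sites `r - 1` and `r`
(`hop`, `eA_eq`, `fA_eq`), while `k_r` is diagonal with eigenvalue `wt q ε r`.

*Relations.* The relations between `k_i` and `e_j`, `f_j` say how a hop changes the weight (`wt_hop`).
For `i ≠ j` the hops in `e_i` and `f_j` commute (`hop_comm`). For `i = j` both `e_i f_i` and `f_i e_i`
are diagonal (`hop_back`), and the commutator relation becomes a scalar identity in the two
occupation numbers involved, checked for each of the four values of `(ε_{i-1}, ε_i)` (`scalar_id`).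

*Irreducibility.* The eigenvalues of the `k_r` separate the basis vectors of `𝒲_l` (`wt_sep`), so a
nonzero invariant subspace contains some `|m⟩` (`exists_single_mem`). From `|m⟩` the `e_r` alone reach
every `|m'⟩` of `𝒲_l`: going around the cycle a particle can be transferred from any site to any site
having room for it (`trans_all`), a full intermediate site being first emptied and then refilled
(`Trans.trans`), and such transfers turn `m` into `m'` (`connected`).
-/

open scoped BigOperators

set_option synthInstance.maxHeartbeats 1000000
set_option maxHeartbeats 1000000

noncomputable section

namespace TetraGQ

/-! ## Scalar ingredients -/

/-- `(a;qb)_m = ∏_{k=0}^{m-1} (1 - a qb^k)`. -/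
def poch (qb a : ℂ) (m : ℕ) : ℂ := ∏ k ∈ Finset.range m, (1 - a * qb ^ k)

/-- The `q`-binomial `binom(m,k)_qb`, zero unless `k ≤ m`. -/
def qbinom (qb : ℂ) (m k : ℕ) : ℂ :=
  if k ≤ m then poch qb qb m / (poch qb qb k * poch qb qb (m - k)) else 0

/-- `[m] = (q^m - q^{-m})/(q - q^{-1})`. -/
def qnum (q : ℂ) (m : ℕ) : ℂ := (q ^ m - q⁻¹ ^ m) / (q - q⁻¹)

/-- `[m]! = ∏_{k=1}^m [k]`. -/
def qfac (q : ℂ) (m : ℕ) : ℂ := ∏ k ∈ Finset.range m, qnum q (k + 1)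

/-- The symmetric `q`-binomial `[m choose k]`, zero unless `k ≤ m`. -/
def qbin (q : ℂ) (m k : ℕ) : ℂ :=
  if k ≤ m then qfac q m / (qfac q k * qfac q (m - k)) else 0

/-- The 3D `R` matrix entry `R^{a,b,c}_{i,j,k}`. -/
def R3 (q : ℂ) (a b c i j k : ℕ) : ℂ :=
  (if a + b = i + j ∧ b + c = j + k then (1 : ℂ) else 0) *
    ∑ lam ∈ Finset.range (b + 1),
      (-1 : ℂ) ^ lam *
        q ^ ((i : ℤ) * ((c : ℤ) - (j : ℤ)) + ((k : ℤ) + 1) * (lam : ℤ) +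
            ((b : ℤ) - (lam : ℤ)) * ((b : ℤ) - (lam : ℤ) - (k : ℤ))) *
        (poch (q ^ 2) (q ^ 2) (c + (b - lam)) / poch (q ^ 2) (q ^ 2) c) *
        qbinom (q ^ 2) i (b - lam) * qbinom (q ^ 2) j lam

/-- The 3D `L` matrix entry `L^{a,b,c}_{i,j,k}`. -/
def L3 (q : ℂ) (a b c i j k : ℕ) : ℂ :=
  if a = 0 ∧ b = 0 ∧ i = 0 ∧ j = 0 ∧ c = k then 1
  else if a = 1 ∧ b = 1 ∧ i = 1 ∧ j = 1 ∧ c = k then 1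
  else if a = 0 ∧ b = 1 ∧ i = 0 ∧ j = 1 ∧ c = k then -q ^ (k + 1)
  else if a = 1 ∧ b = 0 ∧ i = 1 ∧ j = 0 ∧ c = k then q ^ k
  else if a = 0 ∧ b = 1 ∧ i = 1 ∧ j = 0 ∧ c + 1 = k then 1 - q ^ (2 * k)
  else if a = 1 ∧ b = 0 ∧ i = 0 ∧ j = 1 ∧ c = k + 1 then 1
  else 0

/-- `S^(0) = R`, `S^(1) = L`. -/
def Sg (q : ℂ) (e : Bool) (a b c i j k : ℕ) : ℂ :=
  if e then L3 q a b c i j k else R3 q a b c i j k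

/-- Coefficient of `z^{c0}` in the trace solution matrix element
`S₀(z)^{a,b}_{i,j}`. -/
def trCoef (q : ℂ) {n : ℕ} [NeZero n] (ε : Fin n → Bool) (a b i j : Fin n → ℕ)
    (c0 : ℕ) : ℂ :=
  ∑ᶠ c : Fin n → ℕ,
    if c 0 = c0 then
      ∏ t : Fin n, Sg q (ε t) (a t) (b t) (c t) (i t) (j t) (c (t + 1))
    else 0

/-- Coefficient of `z^{c0}` in the boundary solution matrix element
`S₀^{1,1}(z)^{a,b}_{i,j}`. -/
def bdCoef (q : ℂ) {n : ℕ} (ε : Fin n → Bool) (a b i j : Fin n → ℕ) (c0 : ℕ) : ℂ :=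
  ∑ᶠ c : Fin (n + 1) → ℕ,
    if c 0 = c0 then
      poch (q ^ 2) (q ^ 2) c0 / (poch q q c0 * poch q q (c (Fin.last n))) *
        ∏ t : Fin n, Sg q (ε t) (a t) (b t) (c t.castSucc) (i t) (j t) (c t.succ)
    else 0

/-- Coefficient of `z^{c0}` in the boundary solution matrix element
`S₀^{s,t}(z)^{a,b}_{i,j}`. -/
def bdCoefST (q : ℂ) (s t : ℕ) {n : ℕ} (ε : Fin n → Bool) (a b i j : Fin n → ℕ)
    (c0 : ℕ) : ℂ :=
  ∑ᶠ c : Fin (n + 1) → ℕ,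
    if c 0 = c0 then
      poch (q ^ 2) (q ^ 2) (s * c0) /
          (poch (q ^ s ^ 2) (q ^ s ^ 2) c0 * poch (q ^ t ^ 2) (q ^ t ^ 2) (c (Fin.last n))) *
        ∏ u : Fin n,
          Sg q (ε u) (a u) (b u)
            (if u.castSucc = 0 then s * c0 else c u.castSucc) (i u) (j u)
            (if u.succ = Fin.last n then t * c (Fin.last n) else c u.succ)
    else 0

/-! ## The spaces `𝒲` and `𝒲⊗𝒲` -/

/-- `m` is an admissible occupation vector: at positions with `ε = 1` the entry is `≤ 1`. -/
def Ok {n : ℕ} (ε : Fin n → Bool) (m : Fin n → ℕ) : Prop := ∀ t, ε t = true → m t ≤ 1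

instance {n : ℕ} (ε : Fin n → Bool) : DecidablePred (Ok ε) := fun m =>
  decidable_of_iff (∀ t, ε t = true → m t ≤ 1) Iff.rfl

/-- Basis labels of `𝒲`. -/
def Idx {n : ℕ} (ε : Fin n → Bool) : Type := {m : Fin n → ℕ // Ok ε m}

/-- The space `𝒲` with basis `|m⟩`, over the field `L`. -/
abbrev W (L : Type) [Field L] {n : ℕ} (ε : Fin n → Bool) : Type := Idx ε →₀ L

/-- The space `𝒲 ⊗ 𝒲` with basis `|a⟩⊗|b⟩`, over the field `L`. -/
abbrev WW (L : Type) [Field L] {n : ℕ} (ε : Fin n → Bool) : Type := (Idx ε × Idx ε) →₀ L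

/-- The ket `|m⟩ ∈ 𝒲`; it is `0` if any coordinate is out of range. -/
def ket (L : Type) [Field L] {n : ℕ} (ε : Fin n → Bool) (m : Fin n → ℤ) : W L ε :=
  if h : (∀ t, 0 ≤ m t) ∧ Ok ε (fun t => (m t).toNat) then
    Finsupp.single ⟨fun t => (m t).toNat, h.2⟩ 1
  else 0

/-- The ket `|a⟩⊗|b⟩ ∈ 𝒲⊗𝒲`; it is `0` if any coordinate is out of range. -/
def kk (L : Type) [Field L] {n : ℕ} (ε : Fin n → Bool) (a b : Fin n → ℤ) : WW L ε :=
  if h : ((∀ t, 0 ≤ a t) ∧ Ok ε (fun t => (a t).toNat)) ∧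
      ((∀ t, 0 ≤ b t) ∧ Ok ε (fun t => (b t).toNat)) then
    Finsupp.single (⟨fun t => (a t).toNat, h.1.2⟩, ⟨fun t => (b t).toNat, h.2.2⟩) 1
  else 0

/-- The linear endomorphism of a free module determined by images of basis vectors. -/
def mkEnd (L : Type) [Field L] {α : Type} (v : α → (α →₀ L)) :
    (α →₀ L) →ₗ[L] (α →₀ L) :=
  Finsupp.lsum L fun m => LinearMap.toSpanSingleton L (α →₀ L) (v m)

/-- Product of vectors of `𝒲`, landing in `𝒲⊗𝒲`. -/
def tens (L : Type) [Field L] {n : ℕ} {ε : Fin n → Bool} (u v : W L ε) : WW L ε :=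
  u.sum fun a ca => v.sum fun b cb => Finsupp.single (a, b) (ca * cb)

/-- The operator `A ⊗ B` on `𝒲⊗𝒲`. -/
def opT (L : Type) [Field L] {n : ℕ} {ε : Fin n → Bool}
    (A B : W L ε →ₗ[L] W L ε) : WW L ε →ₗ[L] WW L ε :=
  mkEnd L fun mm => tens L (A (Finsupp.single mm.1 1)) (B (Finsupp.single mm.2 1))

/-- The subspace `𝒲_l ⊗ 𝒲_m` of `𝒲⊗𝒲`. -/
def WWlm (L : Type) [Field L] {n : ℕ} (ε : Fin n → Bool) (l m : ℕ) :
    Submodule L (WW L ε) :=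
  Submodule.span L {v | ∃ p : Idx ε × Idx ε,
    (∑ t, p.1.1 t) = l ∧ (∑ t, p.2.1 t) = m ∧ v = Finsupp.single p 1}

/-- The subspace `𝒲_l` of `𝒲`. -/
def Wl (L : Type) [Field L] {n : ℕ} (ε : Fin n → Bool) (l : ℕ) : Submodule L (W L ε) :=
  Submodule.span L {v | ∃ p : Idx ε, (∑ t, p.1 t) = l ∧ v = Finsupp.single p 1}

/-! ## The scalar field of formal Laurent series in `z` over `ℂ` -/

abbrev K : Type := LaurentSeries ℂ

/-- The power series `Σ_{c≥0} f(c) z^c` as an element of `K`. -/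
def mkS (f : ℕ → ℂ) : K := HahnSeries.ofPowerSeries ℤ ℂ (PowerSeries.mk f)

/-- Constants `ℂ → K`. -/
def cK : ℂ →+* K := HahnSeries.C

/-- The variable `z ∈ K`. -/
def zK : K := mkS fun c => if c = 1 then 1 else 0

/-! ## The solutions of the Yang-Baxter equation -/

/-- The unnormalized trace solution `S₀(z)` acting on `𝒲⊗𝒲`. -/
def S0tr (q : ℂ) {n : ℕ} [NeZero n] (ε : Fin n → Bool) : WW K ε →ₗ[K] WW K ε :=
  mkEnd K fun ij =>
    ∑ a ∈ Fintype.piFinset (fun t => Finset.range (ij.1.1 t + ij.2.1 t + 1)),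
      mkS (trCoef q ε a (fun t => ij.1.1 t + ij.2.1 t - a t) ij.1.1 ij.2.1) •
        kk K ε (fun t => (a t : ℤ)) (fun t => (ij.1.1 t : ℤ) + (ij.2.1 t : ℤ) - (a t : ℤ))

/-- The unnormalized boundary solution `S₀^{1,1}(z)` acting on `𝒲⊗𝒲`. -/
def S0bd (q : ℂ) {n : ℕ} (ε : Fin n → Bool) : WW K ε →ₗ[K] WW K ε :=
  mkEnd K fun ij =>
    ∑ a ∈ Fintype.piFinset (fun t => Finset.range (ij.1.1 t + ij.2.1 t + 1)),
      mkS (bdCoef q ε a (fun t => ij.1.1 t + ij.2.1 t - a t) ij.1.1 ij.2.1) •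
        kk K ε (fun t => (a t : ℤ)) (fun t => (ij.1.1 t : ℤ) + (ij.2.1 t : ℤ) - (a t : ℤ))

/-- The unnormalized boundary solution `S₀^{s,t}(z)` acting on `𝒲⊗𝒲`. -/
def S0bdST (q : ℂ) (s t : ℕ) {n : ℕ} (ε : Fin n → Bool) : WW K ε →ₗ[K] WW K ε :=
  mkEnd K fun ij =>
    ∑ a ∈ Fintype.piFinset (fun u => Finset.range (ij.1.1 u + ij.2.1 u + 1)),
      mkS (bdCoefST q s t ε a (fun u => ij.1.1 u + ij.2.1 u - a u) ij.1.1 ij.2.1) •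
        kk K ε (fun u => (a u : ℤ)) (fun u => (ij.1.1 u : ℤ) + (ij.2.1 u : ℤ) - (a u : ℤ))

/-- The diagonal gauge operator; `Kdiag pc ε s |m⟩ = pc^{s·(m₁+⋯+m_n)} |m⟩`
(`s = -1` gives `K`, `s = 1` gives `K⁻¹`). -/
def Kdiag (pc : ℂ) {n : ℕ} (ε : Fin n → Bool) (s : ℤ) : W K ε →ₗ[K] W K ε :=
  mkEnd K fun m => cK (pc ^ (s * ∑ t, (m.1 t : ℤ))) • Finsupp.single m 1

/-- The gauge transformed boundary solution `S̃₀^{1,1}(z) = (K⊗1) S₀^{1,1}(z) (1⊗K⁻¹)`. -/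
def S0bdT (q pc : ℂ) {n : ℕ} (ε : Fin n → Bool) : WW K ε →ₗ[K] WW K ε :=
  opT K (Kdiag pc ε (-1)) LinearMap.id ∘ₗ S0bd q ε ∘ₗ opT K LinearMap.id (Kdiag pc ε 1)

/-! ## The generalized quantum group actions -/

/-- Value of an occupation vector at a natural-number position. -/
def av {n : ℕ} (m : Fin n → ℕ) (p : ℕ) : ℕ := if h : p < n then m ⟨p, h⟩ else 0

/-- Unit coordinate vector at a natural-number position. -/
def dlt {n : ℕ} (p : ℕ) : Fin n → ℤ := fun t => if (t : ℕ) = p then 1 else 0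

/-- `q_i = q` if `ε_i = 0` and `-q⁻¹` if `ε_i = 1` (0-based positions). -/
def qc (q : ℂ) {n : ℕ} (ε : Fin n → Bool) (p : ℕ) : ℂ :=
  if h : p < n then (if ε ⟨p, h⟩ then -q⁻¹ else q) else q

/-- Type A generator `e_r` of the action `π_x`. -/
def eA (q : ℂ) {L : Type} [Field L] (ι : ℂ →+* L) {n : ℕ} (ε : Fin n → Bool) (x : L)
    (r : Fin n) : W L ε →ₗ[L] W L ε :=
  mkEnd L fun m =>
    (x ^ (if (r : ℕ) = 0 then 1 else 0) * ι (qnum q (av m.1 (((r : ℕ) + n - 1) % n)))) •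
      ket L ε fun t => (m.1 t : ℤ) - dlt (((r : ℕ) + n - 1) % n) t + dlt (r : ℕ) t

/-- Type A generator `f_r` of the action `π_x`. -/
def fA (q : ℂ) {L : Type} [Field L] (ι : ℂ →+* L) {n : ℕ} (ε : Fin n → Bool) (x : L)
    (r : Fin n) : W L ε →ₗ[L] W L ε :=
  mkEnd L fun m =>
    (x ^ (if (r : ℕ) = 0 then (-1 : ℤ) else 0) * ι (qnum q (av m.1 (r : ℕ)))) •
      ket L ε fun t => (m.1 t : ℤ) + dlt (((r : ℕ) + n - 1) % n) t - dlt (r : ℕ) t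

/-- Type A generator `k_r^{s}` (`s = ±1`) of the action `π_x`. -/
def kA (q : ℂ) {L : Type} [Field L] (ι : ℂ →+* L) {n : ℕ} (ε : Fin n → Bool) (s : ℤ)
    (r : Fin n) : W L ε →ₗ[L] W L ε :=
  mkEnd L fun m =>
    ι ((qc q ε (((r : ℕ) + n - 1) % n) ^ (-(av m.1 (((r : ℕ) + n - 1) % n) : ℤ)) *
        qc q ε (r : ℕ) ^ (av m.1 (r : ℕ) : ℤ)) ^ s) • Finsupp.single m 1

/-- Type B generator `e_r` of the action `π_x`. -/
def eB (q : ℂ) {L : Type} [Field L] (ι : ℂ →+* L) {n : ℕ} (ε : Fin n → Bool) (x : L)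
    (r : Fin (n + 1)) : W L ε →ₗ[L] W L ε :=
  mkEnd L fun m =>
    if (r : ℕ) = 0 then x • ket L ε (fun t => (m.1 t : ℤ) + dlt 0 t)
    else if (r : ℕ) = n then
      ι (qnum q (av m.1 (n - 1))) • ket L ε (fun t => (m.1 t : ℤ) - dlt (n - 1) t)
    else
      ι (qnum q (av m.1 ((r : ℕ) - 1))) •
        ket L ε (fun t => (m.1 t : ℤ) - dlt ((r : ℕ) - 1) t + dlt (r : ℕ) t)

/-- Type B generator `f_r` of the action `π_x`. -/
def fB (q : ℂ) {L : Type} [Field L] (ι : ℂ →+* L) {n : ℕ} (ε : Fin n → Bool) (x : L)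
    (r : Fin (n + 1)) : W L ε →ₗ[L] W L ε :=
  mkEnd L fun m =>
    if (r : ℕ) = 0 then
      (x⁻¹ * ι (qnum q (av m.1 0))) • ket L ε (fun t => (m.1 t : ℤ) - dlt 0 t)
    else if (r : ℕ) = n then ket L ε (fun t => (m.1 t : ℤ) + dlt (n - 1) t)
    else
      ι (qnum q (av m.1 (r : ℕ))) •
        ket L ε (fun t => (m.1 t : ℤ) + dlt ((r : ℕ) - 1) t - dlt (r : ℕ) t)

/-- Type B generator `k_r^{s}` (`s = ±1`) of the action `π_x`; `pc = i q^{-1/2}`. -/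
def kB (q pc : ℂ) {L : Type} [Field L] (ι : ℂ →+* L) {n : ℕ} (ε : Fin n → Bool) (s : ℤ)
    (r : Fin (n + 1)) : W L ε →ₗ[L] W L ε :=
  mkEnd L fun m =>
    ι ((if (r : ℕ) = 0 then pc⁻¹ * qc q ε 0 ^ (av m.1 0 : ℤ)
        else if (r : ℕ) = n then pc * qc q ε (n - 1) ^ (-(av m.1 (n - 1) : ℤ))
        else qc q ε ((r : ℕ) - 1) ^ (-(av m.1 ((r : ℕ) - 1) : ℤ)) *
          qc q ε (r : ℕ) ^ (av m.1 (r : ℕ) : ℤ)) ^ s) • Finsupp.single m 1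

/-! ## Coproduct actions on `𝒲⊗𝒲` (type A) -/

/-- `Δ(e_r) = 1⊗e_r + e_r⊗k_r`, with `π_x` on the first factor, `π_y` on the second. -/
def dE (q : ℂ) {L : Type} [Field L] (ι : ℂ →+* L) {n : ℕ} (ε : Fin n → Bool) (x y : L)
    (r : Fin n) : WW L ε →ₗ[L] WW L ε :=
  opT L LinearMap.id (eA q ι ε y r) + opT L (eA q ι ε x r) (kA q ι ε 1 r)

/-- `Δ'(e_r) = e_r⊗1 + k_r⊗e_r`. -/
def dE' (q : ℂ) {L : Type} [Field L] (ι : ℂ →+* L) {n : ℕ} (ε : Fin n → Bool) (x y : L)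
    (r : Fin n) : WW L ε →ₗ[L] WW L ε :=
  opT L (eA q ι ε x r) LinearMap.id + opT L (kA q ι ε 1 r) (eA q ι ε y r)

/-- `Δ(f_r) = f_r⊗1 + k_r⁻¹⊗f_r`. -/
def dF (q : ℂ) {L : Type} [Field L] (ι : ℂ →+* L) {n : ℕ} (ε : Fin n → Bool) (x y : L)
    (r : Fin n) : WW L ε →ₗ[L] WW L ε :=
  opT L (fA q ι ε x r) LinearMap.id + opT L (kA q ι ε (-1) r) (fA q ι ε y r)

/-- `Δ'(f_r) = 1⊗f_r + f_r⊗k_r⁻¹`. -/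
def dF' (q : ℂ) {L : Type} [Field L] (ι : ℂ →+* L) {n : ℕ} (ε : Fin n → Bool) (x y : L)
    (r : Fin n) : WW L ε →ₗ[L] WW L ε :=
  opT L LinearMap.id (fA q ι ε y r) + opT L (fA q ι ε x r) (kA q ι ε (-1) r)

/-- `Δ(k_r^s) = Δ'(k_r^s) = k_r^s ⊗ k_r^s`. -/
def dK (q : ℂ) {L : Type} [Field L] (ι : ℂ →+* L) {n : ℕ} (ε : Fin n → Bool) (s : ℤ)
    (r : Fin n) : WW L ε →ₗ[L] WW L ε :=
  opT L (kA q ι ε s r) (kA q ι ε s r)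

/-! ## Coproduct actions on `𝒲⊗𝒲` (type B) -/

def dEB (q pc : ℂ) {L : Type} [Field L] (ι : ℂ →+* L) {n : ℕ} (ε : Fin n → Bool) (x y : L)
    (r : Fin (n + 1)) : WW L ε →ₗ[L] WW L ε :=
  opT L LinearMap.id (eB q ι ε y r) + opT L (eB q ι ε x r) (kB q pc ι ε 1 r)

def dEB' (q pc : ℂ) {L : Type} [Field L] (ι : ℂ →+* L) {n : ℕ} (ε : Fin n → Bool) (x y : L)
    (r : Fin (n + 1)) : WW L ε →ₗ[L] WW L ε :=
  opT L (eB q ι ε x r) LinearMap.id + opT L (kB q pc ι ε 1 r) (eB q ι ε y r)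

def dFB (q pc : ℂ) {L : Type} [Field L] (ι : ℂ →+* L) {n : ℕ} (ε : Fin n → Bool) (x y : L)
    (r : Fin (n + 1)) : WW L ε →ₗ[L] WW L ε :=
  opT L (fB q ι ε x r) LinearMap.id + opT L (kB q pc ι ε (-1) r) (fB q ι ε y r)

def dFB' (q pc : ℂ) {L : Type} [Field L] (ι : ℂ →+* L) {n : ℕ} (ε : Fin n → Bool) (x y : L)
    (r : Fin (n + 1)) : WW L ε →ₗ[L] WW L ε :=
  opT L LinearMap.id (fB q ι ε y r) + opT L (fB q ι ε x r) (kB q pc ι ε (-1) r)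

def dKB (q pc : ℂ) {L : Type} [Field L] (ι : ℂ →+* L) {n : ℕ} (ε : Fin n → Bool) (s : ℤ)
    (r : Fin (n + 1)) : WW L ε →ₗ[L] WW L ε :=
  opT L (kB q pc ι ε s r) (kB q pc ι ε s r)

/-! ## Structure constants -/

/-- Type A structure constant `D_{i,j}` (as a product over 0-based positions). -/
def DA (q : ℂ) {n : ℕ} (ε : Fin n → Bool) (i j : Fin n) : ℂ :=
  ∏ p ∈ (({((i : ℕ) + n - 1) % n, (i : ℕ)} : Finset ℕ) ∩
      ({((j : ℕ) + n - 1) % n, (j : ℕ)} : Finset ℕ)),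
    qc q ε p ^ (if i = j then (1 : ℤ) else -1)

/-- The set `⟨i⟩ = {i, i+1} ∩ [1,n]` of type B, translated to 0-based positions. -/
def nodeB (n i : ℕ) : Finset ℕ :=
  if i = 0 then {0} else if i = n then {n - 1} else {i - 1, i}

/-- Type B structure constant `D_{i,j}`. -/
def DB (q : ℂ) {n : ℕ} (ε : Fin n → Bool) (i j : Fin (n + 1)) : ℂ :=
  ∏ p ∈ nodeB n (i : ℕ) ∩ nodeB n (j : ℕ), qc q ε p ^ (if i = j then (1 : ℤ) else -1)

/-! ## Distinguished vectors -/

/-- The vector `J_{n,j} = Σ_{i, Σi=j} q^{inv(i)} |i⟩⊗|1-i⟩`. -/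
def Jfull (q : ℂ) {L : Type} [Field L] (ι : ℂ →+* L) {n : ℕ} (ε : Fin n → Bool)
    (j : ℕ) : WW L ε :=
  ∑ i ∈ Fintype.piFinset (fun _ : Fin n => Finset.range 2),
    (if (∑ t, i t) = j then
        ι (q ^ (∑ s : Fin n, ∑ t : Fin n, if s < t then i s * (1 - i t) else 0))
      else 0) •
      kk L ε (fun t => (i t : ℤ)) (fun t => 1 - (i t : ℤ))

/-- Extension of a `Fin s`-tuple to `ℕ` by zero. -/
def ivf {s : ℕ} (i : Fin s → ℕ) : ℕ → ℕ := fun p => if h : p < s then i ⟨p, h⟩ else 0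

/-- `inv(i₁,…,i_s) = Σ_{p<r} i_p (1 - i_r)`. -/
def invv (s : ℕ) (iv : ℕ → ℕ) : ℕ :=
  ∑ p ∈ Finset.range s, ∑ r ∈ Finset.range s, if p < r then iv p * (1 - iv r) else 0

/-- Occupation vector `(0^{nn-s-t}, i₁,…,i_s, 1^t)`. -/
def winA (nn s t : ℕ) (iv : ℕ → ℕ) : Fin nn → ℤ := fun u =>
  if (u : ℕ) < nn - s - t then 0
  else if (u : ℕ) < nn - t then (iv ((u : ℕ) - (nn - s - t)) : ℤ)
  else 1

/-- The singular vector `ξ_t^{l,m}` for `κ = n`. -/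
def xiA (q : ℂ) {L : Type} [Field L] (ι : ℂ →+* L) {n : ℕ} (ε : Fin n → Bool)
    (l m t : ℕ) : WW L ε :=
  ∑ i ∈ Fintype.piFinset (fun _ : Fin (l + m - 2 * t) => Finset.range 2),
    (if (∑ u, i u) = l - t then ι (q ^ invv (l + m - 2 * t) (ivf i)) else 0) •
      kk L ε (winA n (l + m - 2 * t) t (ivf i))
        (winA n (l + m - 2 * t) t (fun p => 1 - ivf i p))

/-- Occupation vector `(0^{nn-s-1}, i₁,…,i_s, last)`. -/
def winA1 (nn s : ℕ) (iv : ℕ → ℕ) (last : ℤ) : Fin nn → ℤ := fun u =>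
  if (u : ℕ) < nn - s - 1 then 0
  else if (u : ℕ) < nn - 1 then (iv ((u : ℕ) - (nn - s - 1)) : ℤ)
  else last

/-- The singular vector `ξ_s^{l,m}` for `κ = n-1`. -/
def xiA1 (q : ℂ) {L : Type} [Field L] (ι : ℂ →+* L) {n : ℕ} (ε : Fin n → Bool)
    (l m s : ℕ) : WW L ε :=
  ∑ j ∈ Finset.range (s + 1),
    ∑ i ∈ Fintype.piFinset (fun _ : Fin s => Finset.range 2),
      (if (∑ u, i u) = s - j then
          ι ((-1 : ℂ) ^ j * q ^ (j * (m - s + 1)) * q ^ invv s (ivf i))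
        else 0) •
        kk L ε (winA1 n s (ivf i) ((l : ℤ) + (j : ℤ) - (s : ℤ)))
          (winA1 n s (fun p => 1 - ivf i p) ((m : ℤ) - (j : ℤ)))

/-- The singular vector `ξ_s^{l,m}` for `0 ≤ κ ≤ n-2`. -/
def xiA2 (q : ℂ) {L : Type} [Field L] (ι : ℂ →+* L) {n : ℕ} (ε : Fin n → Bool)
    (l m s : ℕ) : WW L ε :=
  ∑ j ∈ Finset.range (s + 1),
    ι ((-1 : ℂ) ^ j * q ^ ((j : ℤ) * (2 * (s : ℤ) - (m : ℤ) - (j : ℤ) - 1) + (m : ℤ) * (s : ℤ)) *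
        qbin q s j) •
      kk L ε
        (fun u => if (u : ℕ) < n - 2 then 0
          else if (u : ℕ) = n - 2 then (j : ℤ) else (l : ℤ) - (j : ℤ))
        (fun u => if (u : ℕ) < n - 2 then 0
          else if (u : ℕ) = n - 2 then (s : ℤ) - (j : ℤ) else (m : ℤ) - (s : ℤ) + (j : ℤ))

/-- The type B singular vector `ξ_l`. -/
def xiB (q pc : ℂ) {L : Type} [Field L] (ι : ℂ →+* L) {n : ℕ} (ε : Fin n → Bool)
    (l : ℕ) : WW L ε :=
  ∑ m ∈ Finset.range (l + 1),
    ι ((-pc) ^ (-(m : ℤ)) * q ^ ((m : ℤ) * (l : ℤ) - ((m * (m + 1) / 2 : ℕ) : ℤ)) *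
        qbin q l m) •
      kk L ε (fun u => if (u : ℕ) = n - 1 then (m : ℤ) else 0)
        (fun u => if (u : ℕ) = n - 1 then (l : ℤ) - (m : ℤ) else 0)

/-! ## Miscellany -/

/-- Apply a list of operators, the rightmost element of the list acting first. -/
def appList {L : Type} [Field L] {n : ℕ} {ε : Fin n → Bool}
    (ops : List (WW L ε →ₗ[L] WW L ε)) (v : WW L ε) : WW L ε :=
  ops.foldr (fun A w => A w) v

/-- A natural number as an element of `Fin n`. -/
def mfin {n : ℕ} [NeZero n] (p : ℕ) : Fin n :=
  ⟨p % n, Nat.mod_lt p (Nat.pos_of_ne_zero (NeZero.ne n))⟩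

/-- Reference weight-`l` occupation vector: `(0^{n-l},1^l)` if `κ = n`, `l·e_n` otherwise. -/
def refAN (n κ l : ℕ) : Fin n → ℕ := fun t =>
  if κ = n then (if n - l ≤ (t : ℕ) then 1 else 0) else (if (t : ℕ) = n - 1 then l else 0)

/-- The flip `P(u⊗v) = v⊗u` on `𝒲⊗𝒲`. -/
def Pop (L : Type) [Field L] {n : ℕ} (ε : Fin n → Bool) : WW L ε →ₗ[L] WW L ε :=
  mkEnd L fun p => Finsupp.single (p.2, p.1) 1



theorem mkEnd_single {L : Type} [Field L] {α : Type} (v : α → (α →₀ L)) (a : α) :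
    mkEnd L v (Finsupp.single a 1) = v a := by
  simp [mkEnd]

/-! ### Hopping operators -/

/-- `Hop a b m m'` says `|m'⟩ = |m - e_a + e_b⟩`: the label `m'` is obtained from `m` by moving
one particle from site `a` to site `b`. Written without subtraction. -/
def Hop {n : ℕ} {ε : Fin n → Bool} (a b : Fin n) (m m' : Idx ε) : Prop :=
  ∀ t, m'.1 t + (if t = a then 1 else 0) = m.1 t + (if t = b then 1 else 0)

theorem Hop.symm {n : ℕ} {ε : Fin n → Bool} {a b : Fin n} {m m' : Idx ε} (h : Hop a b m m') :
    Hop b a m' m := fun t => (h t).symm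

/-- The hopping operator `|m⟩ ↦ [m_a] |m - e_a + e_b⟩`. Up to powers of `x`, the generators
`e_r` and `f_r` are the hopping operators between the neighbouring sites `r - 1` and `r`. -/
def hop (q : ℂ) {L : Type} [Field L] (ι : ℂ →+* L) {n : ℕ} (ε : Fin n → Bool) (a b : Fin n) :
    W L ε →ₗ[L] W L ε :=
  mkEnd L fun m =>
    ι (qnum q (m.1 a)) •
      ket L ε fun t => (m.1 t : ℤ) - (if t = a then 1 else 0) + (if t = b then 1 else 0)

/-- The parameter `q_p`, with the site `p` an element of `Fin n`. -/
def qs (q : ℂ) {n : ℕ} (ε : Fin n → Bool) (p : Fin n) : ℂ := if ε p then -q⁻¹ else q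

/-- The eigenvalue of `k_r` on `|m⟩`. -/
def wt (q : ℂ) {n : ℕ} [NeZero n] (ε : Fin n → Bool) (r : Fin n) (m : Idx ε) : ℂ :=
  qs q ε (r - 1) ^ (-(m.1 (r - 1) : ℤ)) * qs q ε r ^ (m.1 r : ℤ)

section
variable {q : ℂ} {L : Type} [Field L] {ι : ℂ →+* L} {n : ℕ} {ε : Fin n → Bool}

theorem hop_of_rel {a b : Fin n} {m m' : Idx ε} (h : Hop a b m m') :
    hop q ι ε a b (Finsupp.single m 1) = ι (qnum q (m.1 a)) • Finsupp.single m' 1 := by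
  rw [hop, mkEnd_single]
  congr 1
  have e : (fun t => (m.1 t : ℤ) - (if t = a then 1 else 0) + (if t = b then 1 else 0)) =
      fun t => (m'.1 t : ℤ) := by
    funext t
    have := h t
    split_ifs at this ⊢ <;> omega
  rw [e, ket, dif_pos]
  · rfl
  · exact ⟨fun t => by positivity, fun t ht => by simpa using m'.2 t ht⟩

theorem hop_of_not {a b : Fin n} {m : Idx ε} (h : ¬ ∃ m', Hop a b m m') :
    hop q ι ε a b (Finsupp.single m 1) = 0 := by
  rw [hop, mkEnd_single, ket]
  split_ifs with hc
  · refine absurd ⟨⟨_, hc.2⟩, fun t => ?_⟩ h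
    have h1 := hc.1 t
    simp only
    split_ifs at h1 ⊢ <;> omega
  · simp

theorem exists_hop {a b : Fin n} (hab : a ≠ b) (m : Idx ε) :
    (∃ m', Hop a b m m') ↔ 1 ≤ m.1 a ∧ (ε b = true → m.1 b = 0) := by
  constructor
  · rintro ⟨m', h⟩
    have h1 := h a
    have h2 := h b
    have h3 := m'.2 b
    simp only [if_true, hab, hab.symm, if_false] at h1 h2
    exact ⟨by omega, fun hb => by have := h3 hb; omega⟩
  · rintro ⟨h1, h2⟩
    refine ⟨⟨fun t => m.1 t + (if t = b then 1 else 0) - (if t = a then 1 else 0), ?_⟩, ?_⟩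
    · intro t ht
      have := m.2 t ht
      by_cases htb : t = b
      · subst htb
        have := h2 ht
        simp only [if_true]; omega
      · simp only [htb, if_false]; omega
    · intro t
      simp only
      by_cases hta : t = a
      · subst hta; simp only [if_true]; omega
      · simp only [hta, if_false]; omega

theorem lin_ext {A B : W L ε →ₗ[L] W L ε}
    (h : ∀ m, A (Finsupp.single m 1) = B (Finsupp.single m 1)) : A = B := by
  refine Finsupp.lhom_ext' fun m => LinearMap.ext_ring ?_
  simpa using h m

theorem qnum_zero : qnum q 0 = 0 := by simp [qnum]

/-- Hops `a → b` and `c → d` commute when neither undoes part of the other. Both orders lead to the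
same final label (or both give `0` when that label is inadmissible), and the coefficients agree,
being `[m_a][m_c]` for `a ≠ c` and `[m_a][m_a - 1]` for `a = c`. -/
theorem hop_comm {a b c d : Fin n} (hab : a ≠ b) (hcd : c ≠ d) (had : a ≠ d) (hbc : b ≠ c) :
    hop q ι ε a b ∘ₗ hop q ι ε c d = hop q ι ε c d ∘ₗ hop q ι ε a b := by
  -- the value of a composite in a basis vector, in terms of existence of the final label
  have key : ∀ {a b c d : Fin n} (_ : a ≠ b) (_ : c ≠ d) (_ : a ≠ d) (_ : b ≠ c) (m : Idx ε),
      (∀ m₂ : Idx ε, (∀ t, m₂.1 t + (if t = a then 1 else 0) + (if t = c then 1 else 0) =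
          m.1 t + (if t = b then 1 else 0) + (if t = d then 1 else 0)) →
        hop q ι ε a b (hop q ι ε c d (Finsupp.single m 1)) =
          (ι (qnum q (m.1 c)) * ι (qnum q (m.1 a - (if a = c then 1 else 0)))) •
            Finsupp.single m₂ 1) ∧
      ((¬ ∃ m₂ : Idx ε, (∀ t, m₂.1 t + (if t = a then 1 else 0) + (if t = c then 1 else 0) =
          m.1 t + (if t = b then 1 else 0) + (if t = d then 1 else 0))) →
        hop q ι ε a b (hop q ι ε c d (Finsupp.single m 1)) = 0) := by
    intro a b c d hab hcd had hbc m
    constructor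
    · intro m₂ h2
      obtain ⟨m₁, h1⟩ := (exists_hop (ε := ε) hcd m).2 (by
        have h2c := h2 c
        have h2d := h2 d
        have h3 := m₂.2 d
        simp only [if_true, hcd, hcd.symm, hbc.symm, had.symm, if_false] at h2c h2d
        exact ⟨by omega, fun hb => by have := h3 hb; omega⟩)
      have h12 : Hop a b m₁ m₂ := fun t => by
        have := h1 t
        have := h2 t
        omega
      rw [hop_of_rel h1, map_smul, hop_of_rel h12, smul_smul]
      have h1a := h1 a
      simp only [had, if_false] at h1a
      rw [show m₁.1 a = m.1 a - (if a = c then 1 else 0) by omega]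
    · intro hn
      by_cases h : ∃ m₁, Hop c d m m₁
      · obtain ⟨m₁, h1⟩ := h
        rw [hop_of_rel h1, map_smul, hop_of_not, smul_zero]
        rintro ⟨m₂, h2⟩
        exact hn ⟨m₂, fun t => by have := h1 t; have := h2 t; omega⟩
      · rw [hop_of_not h, map_zero]
  refine lin_ext fun m => ?_
  simp only [LinearMap.comp_apply]
  by_cases h : ∃ m₂ : Idx ε, (∀ t, m₂.1 t + (if t = a then 1 else 0) + (if t = c then 1 else 0) =
          m.1 t + (if t = b then 1 else 0) + (if t = d then 1 else 0))
  · obtain ⟨m₂, h2⟩ := h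
    rw [(key hab hcd had hbc m).1 m₂ h2,
      (key hcd hab hbc.symm had.symm m).1 m₂ (fun t => by have := h2 t; omega)]
    congr 1
    by_cases hac : a = c
    · subst hac; rfl
    · simp [hac, Ne.symm hac, mul_comm]
  · rw [(key hab hcd had hbc m).2 h, (key hcd hab hbc.symm had.symm m).2]
    rintro ⟨m₂, h2⟩
    exact h ⟨m₂, fun t => by have := h2 t; omega⟩

/-- Moving a particle from `b` to `a` and back is diagonal, with eigenvalue `[m_b][m_a + 1]`, or `0`
if `a` has no room. -/
theorem hop_back {a b : Fin n} (hab : a ≠ b) (m : Idx ε) :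
    hop q ι ε a b (hop q ι ε b a (Finsupp.single m 1)) =
      ι (qnum q (m.1 b) * (if ε a = true → m.1 a = 0 then qnum q (m.1 a + 1) else 0)) •
        Finsupp.single m 1 := by
  by_cases h : ∃ m', Hop b a m m'
  · obtain ⟨m', h'⟩ := h
    have h1 := ((exists_hop hab.symm m).1 ⟨m', h'⟩).2
    have h2 := h' a
    simp only [hab, if_true, if_false] at h2
    rw [hop_of_rel h', map_smul, hop_of_rel h'.symm, smul_smul, if_pos h1, map_mul]
    rw [show m'.1 a = m.1 a + 1 by omega]
  · rw [hop_of_not h, map_zero]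
    rw [exists_hop hab.symm, not_and_or] at h
    rcases h with h | h
    · rw [show m.1 b = 0 by omega]; simp [qnum_zero]
    · rw [if_neg h]; simp

theorem qs_ne_zero (hq0 : q ≠ 0) (p : Fin n) : qs q ε p ≠ 0 := by
  unfold qs; split_ifs <;> simp [hq0]

theorem q_sub_ne (hq0 : q ≠ 0) (hq : ∀ k : ℕ, k ≠ 0 → q ^ k ≠ 1) : q - q⁻¹ ≠ 0 := by
  intro h
  refine hq 2 two_ne_zero ?_
  field_simp at h
  linear_combination h

theorem qnum_ne_zero (hq0 : q ≠ 0) (hq : ∀ k : ℕ, k ≠ 0 → q ^ k ≠ 1) {m : ℕ} (hm : 1 ≤ m) :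
    qnum q m ≠ 0 := by
  refine div_ne_zero (fun h => hq (m + m) (by omega) ?_) (q_sub_ne hq0 hq)
  rw [inv_pow] at h
  have : q ^ m ≠ 0 := pow_ne_zero _ hq0
  field_simp at h
  rw [pow_add]
  linear_combination h

/-- The scalar identity behind `[e, f] = (k - k⁻¹)/(q - q⁻¹)`, where a site with `ε = 1` that is
occupied blocks an incoming particle. -/
theorem scalar_id (hq0 : q ≠ 0) (hq : ∀ k : ℕ, k ≠ 0 → q ^ k ≠ 1) (a b : Fin n) (m : Idx ε) :
    qnum q (m.1 b) * (if ε a = true → m.1 a = 0 then qnum q (m.1 a + 1) else 0) -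
      qnum q (m.1 a) * (if ε b = true → m.1 b = 0 then qnum q (m.1 b + 1) else 0) =
    (q - q⁻¹)⁻¹ * (qs q ε a ^ (-(m.1 a : ℤ)) * qs q ε b ^ (m.1 b : ℤ) -
      (qs q ε a ^ (-(m.1 a : ℤ)) * qs q ε b ^ (m.1 b : ℤ))⁻¹) := by
  have h2 : q ^ 2 - 1 ≠ 0 := sub_ne_zero.2 (hq 2 two_ne_zero)
  have h3 : q - q⁻¹ = (q ^ 2 - 1) / q := by field_simp
  have ha := m.2 a
  have hb := m.2 b
  revert ha hb
  generalize m.1 a = A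
  generalize m.1 b = B
  intro ha hb
  unfold qs qnum
  rw [h3]
  have hA : q ^ A ≠ 0 := pow_ne_zero _ hq0
  have hB : q ^ B ≠ 0 := pow_ne_zero _ hq0
  cases hea : ε a <;> cases heb : ε b
  · simp only [zpow_neg, zpow_natCast, inv_pow, pow_succ]
    simp
    field_simp
    ring
  · have := hb heb
    interval_cases B
    · simp
      rw [h3]
      field_simp
      ring
    · simp
      field_simp
      ring
  · have := ha hea
    interval_cases A
    · simp
      field_simp
    · simp
      field_simp
      ring
  · have := ha hea
    have := hb heb
    interval_cases A <;> interval_cases B <;> simp <;> field_simp <;> ring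

end

section
variable {q : ℂ} {L : Type} [Field L] {ι : ℂ →+* L} {n : ℕ} [NeZero n] {ε : Fin n → Bool}

/-! ### The generators as hopping operators, and their relations -/

theorem val_pred (hn : 2 ≤ n) (r : Fin n) : ((r : ℕ) + n - 1) % n = ((r - 1 : Fin n) : ℕ) := by
  have h1 : ((1 : Fin n) : ℕ) = 1 := by
    rw [Fin.val_one', Nat.mod_eq_of_lt (by omega)]
  rw [Fin.val_sub, h1]
  congr 1
  omega

theorem pred_ne (hn : 2 ≤ n) (r : Fin n) : r - 1 ≠ r := by
  intro h
  have h1 : (1 : Fin n) = 0 := by simpa using h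
  have h2 := congrArg Fin.val h1
  rw [Fin.val_one', Nat.mod_eq_of_lt (by omega)] at h2
  simp at h2

omit [NeZero n] in
theorem av_val (m : Fin n → ℕ) (p : Fin n) : av m (p : ℕ) = m p := by
  simp [av]

omit [NeZero n] in
theorem dlt_val (p t : Fin n) : dlt (p : ℕ) t = if t = p then 1 else 0 := by
  simp [dlt, Fin.ext_iff]

omit [NeZero n] in
theorem qc_val (p : Fin n) : qc q ε (p : ℕ) = qs q ε p := by
  simp [qc, qs]

theorem eA_eq (hn : 2 ≤ n) (x : L) (r : Fin n) :
    eA q ι ε x r = (x ^ (if (r : ℕ) = 0 then 1 else 0)) • hop q ι ε (r - 1) r := by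
  refine lin_ext fun m => ?_
  rw [LinearMap.smul_apply, eA, hop, mkEnd_single, mkEnd_single, val_pred hn, smul_smul]
  simp only [av_val, dlt_val]

theorem fA_eq (hn : 2 ≤ n) (x : L) (r : Fin n) :
    fA q ι ε x r = (x ^ (if (r : ℕ) = 0 then 1 else 0))⁻¹ • hop q ι ε r (r - 1) := by
  refine lin_ext fun m => ?_
  rw [LinearMap.smul_apply, fA, hop, mkEnd_single, mkEnd_single, val_pred hn, smul_smul]
  simp only [av_val, dlt_val]
  congr 2
  · split_ifs <;> simp
  · funext t; ring

theorem kA_single (hn : 2 ≤ n) (s : ℤ) (r : Fin n) (m : Idx ε) :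
    kA q ι ε s r (Finsupp.single m 1) = ι (wt q ε r m ^ s) • Finsupp.single m 1 := by
  rw [kA, mkEnd_single, val_pred hn]
  simp only [av_val, qc_val, wt]

theorem wt_ne_zero (hq0 : q ≠ 0) (r : Fin n) (m : Idx ε) : wt q ε r m ≠ 0 :=
  mul_ne_zero (zpow_ne_zero _ (qs_ne_zero hq0 _)) (zpow_ne_zero _ (qs_ne_zero hq0 _))

theorem DA_eq (hn : 2 ≤ n) (i j : Fin n) :
    DA q ε i j =
      (if i - 1 = j - 1 ∨ i - 1 = j then qs q ε (i - 1) ^ (if i = j then (1 : ℤ) else -1) else 1) *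
      (if i = j - 1 ∨ i = j then qs q ε i ^ (if i = j then (1 : ℤ) else -1) else 1) := by
  rw [DA, ← Finset.prod_ite_mem, val_pred hn, val_pred hn, Finset.prod_pair]
  · simp only [Finset.mem_insert, Finset.mem_singleton, Fin.val_inj, qc_val]
  · rw [Ne, Fin.val_inj]; exact pred_ne hn i

/-- A hop `j - 1 → j` changes the weight by the structure constant; this is `k_i e_j = D_{i,j} e_j k_i`
on basis vectors. -/
theorem wt_hop (hn : 2 ≤ n) (hq0 : q ≠ 0) {i j : Fin n} {m m' : Idx ε}
    (h : Hop (j - 1) j m m') : wt q ε i m' = DA q ε i j * wt q ε i m := by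
  have h1 := h (i - 1)
  have h2 := h i
  have hi := pred_ne hn i
  have hj := pred_ne hn j
  have z1 := qs_ne_zero (ε := ε) hq0 (i - 1)
  have z2 := qs_ne_zero (ε := ε) hq0 i
  rw [DA_eq hn, wt, wt]
  have e1 : (m'.1 (i - 1) : ℤ) = m.1 (i - 1) + (if i - 1 = j then 1 else 0) -
      (if i - 1 = j - 1 then 1 else 0) := by
    split_ifs at h1 ⊢ <;> omega
  have e2 : (m'.1 i : ℤ) = m.1 i + (if i = j then 1 else 0) - (if i = j - 1 then 1 else 0) := by
    split_ifs at h2 ⊢ <;> omega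
  rw [e1, e2]
  have hA : (i - 1 = j - 1) ↔ i = j := by simp
  by_cases hij : i = j
  · subst hij
    simp only [hi, hi.symm, if_true, if_false, or_true, true_or]
    simp only [neg_sub, zpow_add₀ z1, zpow_add₀ z2, zpow_sub₀ z1, zpow_sub₀ z2, zpow_neg,
      zpow_one, zpow_zero]
    field_simp
  · simp only [hA, hij, if_false, false_or, or_false]
    have s1 : qs q ε (i - 1) ^ (-((m.1 (i - 1) : ℤ) + (if i - 1 = j then 1 else 0) - 0)) =
        (if i - 1 = j then qs q ε (i - 1) ^ (-1 : ℤ) else 1) *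
          qs q ε (i - 1) ^ (-(m.1 (i - 1) : ℤ)) := by
      split_ifs
      · rw [← zpow_add₀ z1]; congr 1; ring
      · simp
    have s2 : qs q ε i ^ ((m.1 i : ℤ) + 0 - (if i = j - 1 then 1 else 0)) =
        (if i = j - 1 then qs q ε i ^ (-1 : ℤ) else 1) * qs q ε i ^ (m.1 i : ℤ) := by
      split_ifs
      · rw [← zpow_add₀ z2]; congr 1
      · simp
    rw [s1, s2]
    ring

theorem DA_ne_zero (hn : 2 ≤ n) (hq0 : q ≠ 0) (i j : Fin n) : DA q ε i j ≠ 0 := by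
  rw [DA_eq hn]
  have z1 := qs_ne_zero (ε := ε) hq0 (i - 1)
  have z2 := qs_ne_zero (ε := ε) hq0 i
  refine mul_ne_zero ?_ ?_ <;> split_ifs <;> simp [z1, z2]

theorem kA_hop {a b i : Fin n} {c : ℂ} (hn : 2 ≤ n)
    (h : ∀ m m' : Idx ε, Hop a b m m' → wt q ε i m' = c * wt q ε i m) :
    kA q ι ε 1 i ∘ₗ hop q ι ε a b = ι c • (hop q ι ε a b ∘ₗ kA q ι ε 1 i) := by
  refine lin_ext fun m => ?_
  simp only [LinearMap.comp_apply, LinearMap.smul_apply, kA_single hn, zpow_one, map_smul]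
  by_cases hm : ∃ m', Hop a b m m'
  · obtain ⟨m', hm⟩ := hm
    rw [hop_of_rel hm, map_smul, kA_single hn, zpow_one, h m m' hm, smul_smul, smul_smul,
      smul_smul, map_mul]
    congr 1
    ring
  · rw [hop_of_not hm]; simp

theorem kA_inv (hn : 2 ≤ n) (hq0 : q ≠ 0) (i : Fin n) {s t : ℤ} (hst : s + t = 0) :
    kA q ι ε s i ∘ₗ kA q ι ε t i = LinearMap.id := by
  refine lin_ext fun m => ?_
  simp only [LinearMap.comp_apply, LinearMap.id_apply, kA_single hn, map_smul, smul_smul]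
  rw [← map_mul, ← zpow_add₀ (wt_ne_zero hq0 i m), add_comm t s, hst]
  simp

theorem kA_comm (hn : 2 ≤ n) (i j : Fin n) (s t : ℤ) :
    kA q ι ε s i ∘ₗ kA q ι ε t j = kA q ι ε t j ∘ₗ kA q ι ε s i := by
  refine lin_ext fun m => ?_
  simp only [LinearMap.comp_apply, kA_single hn, map_smul, smul_smul, mul_comm]

theorem kA_eA (hn : 2 ≤ n) (hq0 : q ≠ 0) (x : L) (i j : Fin n) :
    kA q ι ε 1 i ∘ₗ eA q ι ε x j = ι (DA q ε i j) • (eA q ι ε x j ∘ₗ kA q ι ε 1 i) := by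
  rw [eA_eq hn, LinearMap.comp_smul, LinearMap.smul_comp,
    kA_hop hn (fun m m' h => wt_hop hn hq0 (i := i) h), smul_comm]

theorem kA_fA (hn : 2 ≤ n) (hq0 : q ≠ 0) (x : L) (i j : Fin n) :
    kA q ι ε 1 i ∘ₗ fA q ι ε x j = (ι (DA q ε i j))⁻¹ • (fA q ι ε x j ∘ₗ kA q ι ε 1 i) := by
  rw [fA_eq hn, LinearMap.comp_smul, LinearMap.smul_comp,
    kA_hop (c := (DA q ε i j)⁻¹) hn (fun m m' h => ?_), smul_comm, map_inv₀]
  rw [wt_hop hn hq0 (i := i) h.symm, inv_mul_cancel_left₀ (DA_ne_zero hn hq0 i j)]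

theorem eA_fA (hn : 2 ≤ n) (hq0 : q ≠ 0) (hq : ∀ k : ℕ, k ≠ 0 → q ^ k ≠ 1) {x : L} (hx : x ≠ 0)
    (i j : Fin n) :
    eA q ι ε x i ∘ₗ fA q ι ε x j - fA q ι ε x j ∘ₗ eA q ι ε x i =
      if i = j then (ι (q - q⁻¹))⁻¹ • (kA q ι ε 1 i - kA q ι ε (-1) i) else 0 := by
  have hi := pred_ne hn i
  have hj := pred_ne hn j
  rw [eA_eq hn, fA_eq hn]
  simp only [LinearMap.comp_smul, LinearMap.smul_comp]
  by_cases hij : i = j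
  · subst hij
    have hc : x ^ (if (i : ℕ) = 0 then 1 else 0) ≠ 0 := pow_ne_zero _ hx
    rw [if_pos rfl]
    rw [smul_smul, smul_smul, inv_mul_cancel₀ hc, mul_inv_cancel₀ hc, one_smul, one_smul]
    refine lin_ext fun m => ?_
    simp only [LinearMap.comp_apply, LinearMap.sub_apply, LinearMap.smul_apply, kA_single hn]
    rw [hop_back hi, hop_back hi.symm, ← sub_smul, ← sub_smul, smul_smul, ← map_sub, ← map_sub,
      scalar_id hq0 hq, ← map_inv₀, ← map_mul, zpow_one, zpow_neg_one]
    rfl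
  · rw [if_neg hij, hop_comm hi hj.symm (by simpa using hij) hij]
    refine lin_ext fun m => ?_
    simp only [LinearMap.sub_apply, LinearMap.smul_apply, LinearMap.zero_apply, smul_smul]
    rw [mul_comm, sub_self]

/-! ### Irreducibility -/


omit [NeZero n] in
theorem Wl_support {l : ℕ} {v : W L ε} (hv : v ∈ Wl L ε l) {m : Idx ε} (hm : v m ≠ 0) :
    ∑ t, m.1 t = l := by
  have h : Wl L ε l ≤ Finsupp.supported L L {m : Idx ε | ∑ t, m.1 t = l} := by
    refine Submodule.span_le.2 ?_
    rintro _ ⟨p, hp, rfl⟩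
    exact Finsupp.single_mem_supported L 1 hp
  exact (Finsupp.mem_supported L v).1 (h hv) (Finsupp.mem_support_iff.2 hm)

theorem zpow_inj' (hq0 : q ≠ 0) (hq : ∀ k : ℕ, k ≠ 0 → q ^ k ≠ 1) {a b : ℤ}
    (h : q ^ a = q ^ b) : a = b := by
  have h1 : q ^ (a - b) = 1 := by rw [zpow_sub₀ hq0, h, div_self (zpow_ne_zero _ hq0)]
  by_contra hne
  refine hq (a - b).natAbs (by omega) ?_
  rcases Int.natAbs_eq (a - b) with e | e
  · rw [e, zpow_natCast] at h1; exact h1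
  · rw [e, zpow_neg, zpow_natCast, inv_eq_one] at h1; exact h1

omit [NeZero n] in
/-- Since `q_p ^ 2 = q ^ (± 2)`, with `-` where `ε_p = 1`, an equation between powers of two of the
`q_p` forces equal exponents up to these signs. -/
theorem qs_zpow_inj (hq0 : q ≠ 0) (hq : ∀ k : ℕ, k ≠ 0 → q ^ k ≠ 1) {p p' : Fin n} {d d' : ℤ}
    (h : qs q ε p ^ d = qs q ε p' ^ d') :
    (if ε p = true then -d else d) = (if ε p' = true then -d' else d') := by
  have sq : ∀ (p : Fin n) (d : ℤ),
      (qs q ε p ^ d) ^ 2 = q ^ (2 * (if ε p = true then -d else d)) := by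
    intro p d
    rw [← zpow_natCast (qs q ε p ^ d), ← zpow_mul, mul_comm, zpow_mul]
    unfold qs
    split_ifs
    · rw [zpow_mul]
      simp [inv_pow]
    · rw [zpow_mul]; simp
  have h2 := zpow_inj' hq0 hq ((sq p d).symm.trans ((congrArg (· ^ 2) h).trans (sq p' d')))
  omega

open scoped Fin.NatCast Fin.CommRing in
/-- The weights separate the basis of `𝒲_l`. If `d` is the difference of two labels with equal
weights, then `q_p ^ d_p` does not depend on `p`, so `± d_p` is a constant (with sign `-` where
`ε_p = 1`). If all signs agree, `∑ d_p = 0` forces `d = 0`; otherwise `d_p = ± 1` is excluded by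
the sign in `-q⁻¹`. -/
theorem wt_sep (hq0 : q ≠ 0) (hq : ∀ k : ℕ, k ≠ 0 → q ^ k ≠ 1) {m m' : Idx ε}
    (hs : ∑ t, m.1 t = ∑ t, m'.1 t) (h : ∀ r, wt q ε r m = wt q ε r m') : m = m' := by
  set d : Fin n → ℤ := fun t => (m.1 t : ℤ) - m'.1 t with hd
  have hsd : ∑ t, d t = 0 := by
    simp only [hd, Finset.sum_sub_distrib]
    rw [sub_eq_zero]; exact_mod_cast hs
  have step : ∀ r, qs q ε r ^ d r = qs q ε (r - 1) ^ d (r - 1) := by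
    intro r
    have z1 := qs_ne_zero (ε := ε) hq0 (r - 1)
    have z2 := qs_ne_zero (ε := ε) hq0 r
    have := h r
    simp only [wt, zpow_neg] at this
    simp only [hd, zpow_sub₀ z1, zpow_sub₀ z2]
    have w1 := zpow_ne_zero (m.1 (r - 1) : ℤ) z1
    have w2 := zpow_ne_zero (m'.1 (r - 1) : ℤ) z1
    have w3 := zpow_ne_zero (m.1 r : ℤ) z2
    have w4 := zpow_ne_zero (m'.1 r : ℤ) z2
    field_simp at this ⊢
    linear_combination this
  have all : ∀ r, qs q ε r ^ d r = qs q ε 0 ^ d 0 := by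
    have : ∀ k : ℕ, qs q ε (k : Fin n) ^ d (k : Fin n) = qs q ε 0 ^ d 0 := by
      intro k
      induction k with
      | zero => simp
      | succ k ih => rw [step, Nat.cast_succ, add_sub_cancel_right, ih]
    intro r
    simpa using this r
  have hconst := fun r => qs_zpow_inj hq0 hq (all r)
  have hferm : ∀ r, ε r = true → -1 ≤ d r ∧ d r ≤ 1 := fun r hr => by
    have := m.2 r hr
    have := m'.2 r hr
    simp only [hd]; omega
  have hzero : ∀ r, d r = 0 := by
    by_cases hsame : ∀ r, ε r = ε 0
    · have hc : ∀ r, d r = d 0 := by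
        intro r
        have := hconst r
        rw [hsame r] at this
        split_ifs at this <;> omega
      rw [Finset.sum_congr rfl (fun r _ => hc r), Finset.sum_const, Finset.card_univ,
        Fintype.card_fin, nsmul_eq_mul, mul_eq_zero] at hsd
      have : (n : ℤ) ≠ 0 := by exact_mod_cast NeZero.ne n
      intro r
      rw [hc r]; tauto
    · push Not at hsame
      obtain ⟨r, hr⟩ := hsame
      -- one of the two sites `r`, `0` has `ε = 1` and the other has `ε = 0`
      have main : ∃ a b : Fin n, ε a = true ∧ ε b = false := by
        cases h0 : ε 0 <;> cases h1 : ε r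
        · simp [h0, h1] at hr
        · exact ⟨r, 0, h1, h0⟩
        · exact ⟨0, r, h0, h1⟩
        · simp [h0, h1] at hr
      obtain ⟨a, b, ha, hb⟩ := main
      have e : qs q ε a ^ d a = qs q ε b ^ d b := (all a).trans (all b).symm
      have e2 := qs_zpow_inj hq0 hq e
      have ha0 : d a = 0 := by
        have hr := hferm a ha
        simp only [ha, hb, if_true, Bool.false_eq_true, if_false] at e2
        have h3 : d a = -1 ∨ d a = 0 ∨ d a = 1 := by omega
        rcases h3 with h3 | h3 | h3
        · exfalso
          rw [← e2, h3] at e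
          simp only [qs, ha, hb, if_true, Bool.false_eq_true, if_false] at e
          norm_num at e
          exact hq0 (by linear_combination (-1 / 2 : ℂ) * e)
        · exact h3
        · exfalso
          rw [← e2, h3] at e
          simp only [qs, ha, hb, if_true, Bool.false_eq_true, if_false] at e
          norm_num at e
          exact inv_ne_zero hq0 (by linear_combination (-1 / 2 : ℂ) * e)
      intro r
      have h4 := (hconst r).trans (hconst a).symm
      rw [ha0] at h4
      split_ifs at h4 <;> omega
  refine Subtype.ext (funext fun t => ?_)
  have := hzero t
  simp only [hd] at this
  omega

theorem kA_apply (hn : 2 ≤ n) (s : ℤ) (r : Fin n) (v : W L ε) (m : Idx ε) :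
    kA q ι ε s r v m = ι (wt q ε r m ^ s) * v m := by
  classical
  induction v using Finsupp.induction_linear with
  | zero => simp
  | add u v hu hv => simp [hu, hv, mul_add]
  | single a c =>
    rw [show Finsupp.single a c = c • Finsupp.single a (1 : L) by simp, map_smul, kA_single hn]
    by_cases h : a = m
    · subst h; simp [mul_comm]
    · simp [h]

/-- A nonzero invariant subspace of `𝒲_l` contains a basis vector: applying `k_r - λ`, with `λ` the
eigenvalue of one term of `v`, shortens `v`. -/
theorem exists_single_mem (hn : 2 ≤ n) (hq0 : q ≠ 0) (hq : ∀ k : ℕ, k ≠ 0 → q ^ k ≠ 1) {l : ℕ}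
    {U : Submodule L (W L ε)} (hU : U ≤ Wl L ε l)
    (hk : ∀ r, ∀ v ∈ U, kA q ι ε 1 r v ∈ U) (N : ℕ) :
    ∀ v ∈ U, v ≠ 0 → v.support.card = N → ∃ m, Finsupp.single m (1 : L) ∈ U := by
  classical
  induction N using Nat.strong_induction_on with
  | _ N ih =>
    intro v hv hv0 hN
    obtain ⟨m, hm⟩ := Finsupp.ne_iff.1 hv0
    rw [Finsupp.zero_apply] at hm
    by_cases h : ∃ m', v m' ≠ 0 ∧ m' ≠ m
    · obtain ⟨m', hm', hne⟩ := h
      have hsum := (Wl_support (hU hv) hm').trans (Wl_support (hU hv) hm).symm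
      obtain ⟨r, hr⟩ : ∃ r, wt q ε r m' ≠ wt q ε r m := by
        by_contra! hc
        exact hne (wt_sep hq0 hq hsum hc)
      let w : W L ε := kA q ι ε 1 r v - ι (wt q ε r m) • v
      have hw : ∀ p, w p = (ι (wt q ε r p) - ι (wt q ε r m)) * v p := by
        intro p
        simp [w, kA_apply hn, sub_mul]
      refine ih w.support.card ?_ w (U.sub_mem (hk r v hv) (U.smul_mem _ hv)) ?_ rfl
      · rw [← hN]
        refine Finset.card_lt_card ⟨fun p hp => ?_, fun hsub => ?_⟩
        · rw [Finsupp.mem_support_iff, hw] at hp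
          exact Finsupp.mem_support_iff.2 (right_ne_zero_of_mul hp)
        · have := hsub (Finsupp.mem_support_iff.2 hm)
          rw [Finsupp.mem_support_iff, hw, sub_self, zero_mul] at this
          exact this rfl
      · intro hw0
        have h1 := hw m'
        rw [hw0, Finsupp.zero_apply, eq_comm, mul_eq_zero, sub_eq_zero] at h1
        rcases h1 with h1 | h1
        · exact hr (ι.injective h1)
        · exact hm' h1
    · push Not at h
      refine ⟨m, ?_⟩
      have : Finsupp.single m (1 : L) = (v m)⁻¹ • v := by
        ext p
        by_cases hp : p = m
        · subst hp; simp [hm]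
        · have : v p = 0 := by
            by_contra hc
            exact hp (h p hc)
          simp [Ne.symm hp, this]
      rw [this]
      exact U.smul_mem _ hv

/-- `Trans P a b` says that the set `P` of labels is stable under moving one particle from site `a`
to site `b` whenever the result is admissible. -/
def Trans (P : Idx ε → Prop) (a b : Fin n) : Prop := ∀ m m', P m → Hop a b m m' → P m'

omit [NeZero n] in
/-- Composition of particle transfers: if the intermediate site `k` is empty, move `a → k → b`;
if it is occupied, first move `k → b`, then refill it by `a → k`. -/
theorem Trans.trans {P : Idx ε → Prop} {a k b : Fin n} (h1 : Trans P a k) (h2 : Trans P k b) :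
    Trans P a b := by
  by_cases hak : a = k
  · subst hak; exact h2
  by_cases hkb : k = b
  · subst hkb; exact h1
  intro m m' hm hmm
  by_cases hab : a = b
  · subst hab
    have : m' = m := Subtype.ext (funext fun t => by have := hmm t; omega)
    rwa [this]
  obtain ⟨ha, hb⟩ := (exists_hop hab m).1 ⟨m', hmm⟩
  by_cases hk : m.1 k = 0
  · obtain ⟨p, hp⟩ := (exists_hop hak m).2 ⟨ha, fun _ => hk⟩
    exact h2 p m' (h1 m p hm hp) fun t => by have := hp t; have := hmm t; omega
  · obtain ⟨p, hp⟩ := (exists_hop hkb m).2 ⟨by omega, hb⟩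
    exact h1 p m' (h2 m p hm hp) fun t => by have := hp t; have := hmm t; omega

open scoped Fin.NatCast Fin.CommRing in
theorem trans_all {P : Idx ε → Prop} (h : ∀ r, Trans P (r - 1) r) (a b : Fin n) :
    Trans P a b := by
  have key : ∀ k : ℕ, Trans P a (a + (k : Fin n)) := by
    intro k
    induction k with
    | zero =>
      intro m m' hm hmm
      have : m' = m := Subtype.ext (funext fun t => by
        have := hmm t
        simp only [Nat.cast_zero, add_zero] at this
        omega)
      rwa [this]
    | succ k ih =>
      have := h (a + ((k + 1 : ℕ) : Fin n))
      rw [Nat.cast_succ, ← add_assoc, add_sub_cancel_right] at this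
      rw [Nat.cast_succ, ← add_assoc]
      exact ih.trans this
  have := key ((b - a : Fin n) : ℕ)
  simpa using this

omit [NeZero n] in
/-- A set of labels stable under all particle transfers and containing one label with `l` particles
contains all of them: each transfer from a site of surplus to a site of deficit lowers the distance
to the target. -/
theorem connected {P : Idx ε → Prop} (h : ∀ a b, Trans P a b) (N : ℕ) :
    ∀ m m' : Idx ε, P m → ∑ t, m.1 t = ∑ t, m'.1 t → ∑ t, (m.1 t - m'.1 t) = N → P m' := by
  induction N with
  | zero =>
    intro m m' hm hs hN
    have hle : ∀ t ∈ Finset.univ, m.1 t ≤ m'.1 t := by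
      intro t _
      have := (Finset.sum_eq_zero_iff.1 hN) t (Finset.mem_univ t)
      omega
    have := (Finset.sum_eq_sum_iff_of_le hle).1 hs
    have : m = m' := Subtype.ext (funext fun t => this t (Finset.mem_univ t))
    rwa [← this]
  | succ N ih =>
    intro m m' hm hs hN
    obtain ⟨a, ha⟩ : ∃ a, m'.1 a < m.1 a := by
      by_contra! hc
      have : ∑ t, (m.1 t - m'.1 t) = 0 := Finset.sum_eq_zero fun t _ => by have := hc t; omega
      omega
    obtain ⟨b, hb⟩ : ∃ b, m.1 b < m'.1 b := by
      by_contra! hc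
      have := Finset.sum_lt_sum (fun t (_ : t ∈ Finset.univ) => hc t) ⟨a, Finset.mem_univ a, ha⟩
      omega
    have hab : a ≠ b := by rintro rfl; omega
    obtain ⟨p, hp⟩ := (exists_hop hab m).2
      ⟨by omega, fun hε => by have := m'.2 b hε; omega⟩
    refine ih p m' (h a b m p hm hp) ?_ ?_
    · have := Finset.sum_congr rfl fun t (_ : t ∈ Finset.univ) => hp t
      simp only [Finset.sum_add_distrib, Finset.sum_ite_eq', Finset.mem_univ, if_true] at this
      omega
    · have h1 : ∑ t, ((p.1 t - m'.1 t) + (if t = a then 1 else 0)) = ∑ t, (m.1 t - m'.1 t) := by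
        refine Finset.sum_congr rfl fun t _ => ?_
        have := hp t
        by_cases hta : t = a
        · subst hta
          simp only [hab, if_true, if_false] at this ⊢
          omega
        · by_cases htb : t = b
          · subst htb
            simp only [hta, if_true, if_false] at this ⊢
            omega
          · simp only [hta, htb, if_false] at this ⊢
            omega
      simp only [Finset.sum_add_distrib, Finset.sum_ite_eq', Finset.mem_univ, if_true] at h1
      omega

/-- Irreducibility: an invariant `U ≠ 0` contains some `|m⟩`, and the `e_r` connect it to every other
basis vector of `𝒲_l`, because the coefficients `[m_{r-1}]` of nontrivial hops do not vanish. -/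
theorem irred (hn : 2 ≤ n) (hq0 : q ≠ 0) (hq : ∀ k : ℕ, k ≠ 0 → q ^ k ≠ 1) {x : L} (hx : x ≠ 0)
    {l : ℕ} {U : Submodule L (W L ε)} (hU : U ≤ Wl L ε l)
    (he : ∀ r, ∀ v ∈ U, eA q ι ε x r v ∈ U)
    (hk : ∀ r, ∀ v ∈ U, kA q ι ε 1 r v ∈ U) : U = ⊥ ∨ U = Wl L ε l := by
  by_cases hbot : U = ⊥
  · exact Or.inl hbot
  right
  obtain ⟨v, hv, hv0⟩ := Submodule.exists_mem_ne_zero_of_ne_bot hbot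
  obtain ⟨m, hm⟩ := exists_single_mem hn hq0 hq hU hk _ v hv hv0 rfl
  have hml : ∑ t, m.1 t = l := Wl_support (hU hm) (by simp)
  have htr : ∀ r, Trans (fun p : Idx ε => Finsupp.single p (1 : L) ∈ U) (r - 1) r := by
    intro r p p' hp hpp
    have h1 := he r _ hp
    have hp1 : 1 ≤ p.1 (r - 1) := ((exists_hop (pred_ne hn r) p).1 ⟨p', hpp⟩).1
    rw [eA_eq hn, LinearMap.smul_apply, hop_of_rel hpp, smul_smul] at h1
    refine (U.smul_mem_iff (mul_ne_zero (pow_ne_zero _ hx) ?_)).1 h1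
    rw [Ne, map_eq_zero]
    exact qnum_ne_zero hq0 hq hp1
  refine le_antisymm hU (Submodule.span_le.2 ?_)
  rintro _ ⟨p, hp, rfl⟩
  exact connected (trans_all htr) _ m p hm (hml.trans hp.symm) rfl

end

/-- the type-A assignment is an irreducible representation
(defining relations plus irreducibility of `𝒲_l`), with `x` an indeterminate. -/
theorem statement_5 (q : ℂ) (hq0 : q ≠ 0) (hq : ∀ k : ℕ, k ≠ 0 → q ^ k ≠ 1)
    (n : ℕ) [NeZero n] (hn : 2 ≤ n) (ε : Fin n → Bool)
    (l : ℕ) (hl : (∀ t, ε t = true) → l ≤ n) :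
    (∀ i j : Fin n,
      kA q (RatFunc.C : ℂ →+* RatFunc ℂ) ε 1 i ∘ₗ kA q RatFunc.C ε (-1) i = LinearMap.id ∧
      kA q (RatFunc.C : ℂ →+* RatFunc ℂ) ε (-1) i ∘ₗ kA q RatFunc.C ε 1 i = LinearMap.id ∧
      kA q (RatFunc.C : ℂ →+* RatFunc ℂ) ε 1 i ∘ₗ kA q RatFunc.C ε 1 j
        = kA q RatFunc.C ε 1 j ∘ₗ kA q RatFunc.C ε 1 i ∧
      kA q (RatFunc.C : ℂ →+* RatFunc ℂ) ε 1 i ∘ₗ eA q RatFunc.C ε RatFunc.X j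
        = RatFunc.C (DA q ε i j) • (eA q RatFunc.C ε RatFunc.X j ∘ₗ kA q RatFunc.C ε 1 i) ∧
      kA q (RatFunc.C : ℂ →+* RatFunc ℂ) ε 1 i ∘ₗ fA q RatFunc.C ε RatFunc.X j
        = (RatFunc.C (DA q ε i j))⁻¹ •
            (fA q RatFunc.C ε RatFunc.X j ∘ₗ kA q RatFunc.C ε 1 i) ∧
      eA q (RatFunc.C : ℂ →+* RatFunc ℂ) ε RatFunc.X i ∘ₗ fA q RatFunc.C ε RatFunc.X j
          - fA q RatFunc.C ε RatFunc.X j ∘ₗ eA q RatFunc.C ε RatFunc.X i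
        = if i = j then
            (RatFunc.C (q - q⁻¹))⁻¹ • (kA q RatFunc.C ε 1 i - kA q RatFunc.C ε (-1) i)
          else 0) ∧
    (∀ U : Submodule (RatFunc ℂ) (W (RatFunc ℂ) ε), U ≤ Wl (RatFunc ℂ) ε l →
      (∀ r : Fin n, ∀ v ∈ U,
        eA q (RatFunc.C : ℂ →+* RatFunc ℂ) ε RatFunc.X r v ∈ U ∧
        fA q RatFunc.C ε RatFunc.X r v ∈ U ∧
        kA q RatFunc.C ε 1 r v ∈ U ∧ kA q RatFunc.C ε (-1) r v ∈ U) →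
      U = ⊥ ∨ U = Wl (RatFunc ℂ) ε l) := by
  have hX : (RatFunc.X : RatFunc ℂ) ≠ 0 := RatFunc.X_ne_zero
  refine ⟨fun i j => ⟨kA_inv hn hq0 i (by norm_num), kA_inv hn hq0 i (by norm_num),
    kA_comm hn i j 1 1, kA_eA hn hq0 _ i j, kA_fA hn hq0 _ i j, eA_fA hn hq0 hq hX i j⟩,
    fun U hU h => irred hn hq0 hq hX hU (fun r v hv => (h r v hv).1)
      fun r v hv => (h r v hv).2.2.1⟩

end TetraGQ
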